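/- Let q be a prime power and let r, M, N be positive integers with q ≥ N > M > 1 and r odd. Suppose D_1 ⊆ D_r are nested linear codes over F_q, where D_1 is a [q+1, 1, q+1]_q MDS code and D_r is a [q+1, r, q+2-r]_q MDS code. Let C_1 = ⋯ = C_{M-1} = D_r, C_M = D_1, and let C = (C_1,...,C_M)·A be the matrix-product code, where A is an M×N NSC matrix over F_q. If (r-1)(N-M+1) + r ≤ q + 2, then C is an optimal (r, q+2-r)-LRC with parameters [N(q+1), (M-1)r+1, (N-M+1)(q+1)]_q. -/

import Mathlib

namespace LRCPaper

noncomputable section Defs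

variable {F : Type} [Field F] [Fintype F] [DecidableEq F]

/-- The punctured code of `C` on the coordinate set `S`: delete all coordinates outside `S`. -/
def punctureCode {ι : Type} [Fintype ι] (C : Submodule F (ι → F)) (S : Finset ι) :
    Submodule F ({ x // x ∈ S } → F) :=
  C.map (LinearMap.funLeft F F (fun j : { x // x ∈ S } => (j : ι)))

/-- Every nonzero codeword of `C` has Hamming weight at least `δ`
(i.e. the minimum distance of `C` is at least `δ`). -/
def minWtGe {ι : Type} [Fintype ι] (C : Submodule F (ι → F)) (δ : ℕ) : Prop :=
  ∀ c ∈ C, c ≠ 0 → δ ≤ hammingNorm c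

/-- The minimum Hamming distance of the linear code `C` is exactly `d`. -/
def minDistIs {ι : Type} [Fintype ι] (C : Submodule F (ι → F)) (d : ℕ) : Prop :=
  (∃ c ∈ C, c ≠ 0 ∧ hammingNorm c = d) ∧ minWtGe C d

/-- The `i`-th code symbol of `C` has `(r, δ)`-locality. -/
def symbolHasLocality {ι : Type} [Fintype ι] (C : Submodule F (ι → F)) (r δ : ℕ) (i : ι) :
    Prop :=
  ∃ S : Finset ι, i ∈ S ∧ S.card ≤ r + δ - 1 ∧ minWtGe (punctureCode C S) δ

/-- `C` is an `(r, δ)`-locally repairable code. -/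
def IsLRC {ι : Type} [Fintype ι] (C : Submodule F (ι → F)) (r δ : ℕ) : Prop :=
  ∀ i : ι, symbolHasLocality C r δ i

/-- The right-hand side `n - k + 1 - (⌈k/r⌉ - 1)(δ - 1)` of the Singleton-type bound
for `(r, δ)`-LRCs, as an integer. -/
def optBound (n k r δ : ℕ) : ℤ :=
  (n : ℤ) - (k : ℤ) + 1 - (⌈(k : ℚ) / (r : ℚ)⌉ - 1) * ((δ : ℤ) - 1)

/-- `C` is an optimal `(r, δ)`-LRC with parameters `[card ι, k, d]`. -/
def IsOptimalLRC {ι : Type} [Fintype ι] (C : Submodule F (ι → F)) (k d r δ : ℕ) : Prop :=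
  IsLRC C r δ ∧ Module.finrank F ↥C = k ∧ minDistIs C d ∧
    (d : ℤ) = optBound (Fintype.card ι) k r δ

/-- `C` is an optimal `(r, δ)`-LRC (its minimum distance meets the Singleton-type bound). -/
def IsOptimalLRCCode {ι : Type} [Fintype ι] (C : Submodule F (ι → F)) (r δ : ℕ) : Prop :=
  IsLRC C r δ ∧ ∃ d : ℕ, minDistIs C d ∧
    (d : ℤ) = optBound (Fintype.card ι) (Module.finrank F ↥C) r δ

/-- The linear map underlying the matrix-product construction: it sends
`(c_1, …, c_M)` to `(∑_ℓ c_ℓ a_{ℓ,1}, …, ∑_ℓ c_ℓ a_{ℓ,N})`. -/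
def mpMap {ι : Type} [Fintype ι] {M N : ℕ} (A : Matrix (Fin M) (Fin N) F) :
    (Fin M → ι → F) →ₗ[F] (Fin N × ι → F) where
  toFun c := fun p => ∑ ℓ : Fin M, c ℓ p.2 * A ℓ p.1
  map_add' x y := by
    funext p
    simp [add_mul, Finset.sum_add_distrib]
  map_smul' a x := by
    funext p
    simp [Finset.mul_sum, mul_assoc]

/-- The matrix-product code `(C_1, …, C_M) · A`, a linear code of length `N * card ι`
with coordinates indexed by `Fin N × ι`. -/
def matrixProductCode {ι : Type} [Fintype ι] {M N : ℕ}
    (Cs : Fin M → Submodule F (ι → F)) (A : Matrix (Fin M) (Fin N) F) :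
    Submodule F (Fin N × ι → F) :=
  (Submodule.pi Set.univ Cs).map (mpMap A)

/-- The linear code of length `N` generated by the first `i` rows of `A`. -/
def rowSpanCode {M N : ℕ} (A : Matrix (Fin M) (Fin N) F) (i : ℕ) :
    Submodule F (Fin N → F) :=
  Submodule.span F {w : Fin N → F | ∃ ℓ : Fin M, (ℓ : ℕ) < i ∧ w = A ℓ}

/-- `A` is nonsingular by columns (NSC): for every `i ≤ M`, every `i × i` submatrix
formed by choosing `i` columns of the first `i` rows of `A` is nonsingular. -/
def IsNSC {M N : ℕ} (A : Matrix (Fin M) (Fin N) F) : Prop :=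
  ∀ (i : ℕ) (hi : i ≤ M) (f : Fin i → Fin N), StrictMono f →
    (Matrix.of fun a b : Fin i => A (Fin.castLE hi a) (f b)).det ≠ 0

/-- Evaluation map underlying generalized Reed–Solomon codes:
`p ↦ (v_1 p(a_1), …, v_n p(a_n))`. -/
def grsMap {n : ℕ} (a v : Fin n → F) : Polynomial F →ₗ[F] (Fin n → F) where
  toFun p := fun i => v i * Polynomial.eval (a i) p
  map_add' p q := by funext i; simp [mul_add]
  map_smul' c p := by funext i; simp [mul_left_comm]

/-- The generalized Reed–Solomon code `GRS_k(a, v)`. -/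
def GRSCode {n : ℕ} (k : ℕ) (a v : Fin n → F) : Submodule F (Fin n → F) :=
  (Polynomial.degreeLT F k).map (grsMap a v)

/-- The set of indices of nonzero columns of `H`. -/
def colSupport {m n : ℕ} (H : Matrix (Fin m) (Fin n) F) : Finset (Fin n) :=
  Finset.univ.filter fun j => ∃ i, H i j ≠ 0

/-- Entry `(i, j)` (0-based) of the `2(δ-1) × (2m-1)` matrix `Ĥ`, built from the distinct
elements `α 0, …, α (m-1)` and nonzero scalars `lam 0, …, lam (m-1)`. -/
def hatEntry (δ m : ℕ) (α lam : ℕ → F) (i j : ℕ) : F :=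
  if i < δ - 1 then (if j < m then lam j * α j ^ i else 0)
  else (if m - 1 ≤ j then lam (2 * m - 2 - j) * α (2 * m - 2 - j) ^ (i - (δ - 1)) else 0)

/-- Entry `(i, j)` (0-based) of the `v(δ-1) × (vm-1)` block-diagonal matrix
`ℋ = H ⊕ ⋯ ⊕ H ⊕ Ĥ` (`v - 2` diagonal copies of `H` followed by `Ĥ`). -/
def calHEntry (δ m v : ℕ) (α lam : ℕ → F) (i j : ℕ) : F :=
  if i < (v - 2) * (δ - 1) then
    (if j < (v - 2) * m ∧ j / m = i / (δ - 1) then lam (j % m) * α (j % m) ^ (i % (δ - 1))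
      else 0)
  else
    (if (v - 2) * m ≤ j then hatEntry δ m α lam (i - (v - 2) * (δ - 1)) (j - (v - 2) * m)
      else 0)

/-- Entry `(i, j)` (0-based) of the `(v(δ-1)+τ) × (vm-1)` matrix `H̃`, obtained by appending
the row block `(A, …, A, Â)` below `ℋ`. -/
def tildeHEntry (δ m v : ℕ) (α lam : ℕ → F) (i j : ℕ) : F :=
  if i < v * (δ - 1) then calHEntry δ m v α lam i j
  else
    lam (if j < (v - 2) * m then j % m
          else (if j - (v - 2) * m < m then j - (v - 2) * m
                else 2 * m - 2 - (j - (v - 2) * m))) *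
      α (if j < (v - 2) * m then j % m
          else (if j - (v - 2) * m < m then j - (v - 2) * m
                else 2 * m - 2 - (j - (v - 2) * m))) ^
        ((δ - 1) + (i - v * (δ - 1)))

end Defs
theorem nsc_zeros {F : Type} [Field F] [DecidableEq F]
    {M N : ℕ} (A : Matrix (Fin M) (Fin N) F) (hA : IsNSC A) (v : Fin M → F) (l : Fin M)
    (hl : v l ≠ 0) (hz : ∀ m, l < m → v m = 0) :
    N ≤ (Finset.univ.filter fun j : Fin N => ∑ m, v m * A m j ≠ 0).card + l := by
  by_contra hcon
  push Not at hcon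
  have hsum := Finset.card_filter_add_card_filter_not (s := (Finset.univ : Finset (Fin N)))
    (fun j : Fin N => ∑ m, v m * A m j ≠ 0)
  simp only [Finset.card_univ, Fintype.card_fin] at hsum
  have hle : (l : ℕ) + 1 ≤
      (Finset.univ.filter fun j : Fin N => ¬ (∑ m, v m * A m j ≠ 0)).card := by omega
  obtain ⟨T, hT, hTc⟩ := Finset.exists_subset_card_eq hle
  have hi : (l : ℕ) + 1 ≤ M := l.2
  have hdet := hA (l + 1) hi (T.orderEmbOfFin hTc) (T.orderEmbOfFin hTc).strictMono
  have hv0 := Matrix.eq_zero_of_vecMul_eq_zero hdet (v := fun a => v (Fin.castLE hi a)) (by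
    funext b
    have hb := hT (T.orderEmbOfFin_mem hTc b)
    simp only [Finset.mem_filter, Finset.mem_univ, true_and, not_not] at hb
    simp only [Matrix.vecMul, dotProduct, Matrix.of_apply, Pi.zero_apply]
    rw [← hb]
    refine Finset.sum_of_injOn (Fin.castLE hi) (Fin.castLE_injective hi).injOn
      (by intro _ _; simp) ?_ (by intros; rfl)
    intro m _ hm
    rw [hz m, zero_mul]
    by_contra hlt
    apply hm
    refine ⟨⟨m, by have : (m : ℕ) ≤ l := not_lt.mp hlt
                   omega⟩, by simp, by ext; simp⟩)
  apply hl
  have := congrFun hv0 ⟨l, by omega⟩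
  simpa using this

theorem hamming_prod {F : Type} [Field F] [DecidableEq F] {ι : Type} [Fintype ι] {N : ℕ}
    (w : Fin N × ι → F) :
    hammingNorm w = ∑ x : ι, (Finset.univ.filter fun j : Fin N => w (j, x) ≠ 0).card := by
  classical
  unfold hammingNorm
  simp only [Finset.card_filter]
  rw [Fintype.sum_prod_type_right]

theorem mp_weight {F : Type} [Field F] [Fintype F] [DecidableEq F] {ι : Type} [Fintype ι]
    {M N : ℕ} (A : Matrix (Fin M) (Fin N) F) (hA : IsNSC A) (c : Fin M → ι → F) (l : Fin M)
    (hz : ∀ m, l < m → c m = 0) :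
    (N - l) * hammingNorm (c l) ≤ hammingNorm (mpMap A c) := by
  classical
  rw [hamming_prod, mul_comm]
  have h1 : hammingNorm (c l) * (N - l) =
      ∑ x ∈ Finset.univ.filter (fun x => c l x ≠ 0), (N - (l : ℕ)) := by
    rw [Finset.sum_const, smul_eq_mul]; rfl
  rw [h1]
  refine le_trans (Finset.sum_le_sum (fun x hx => ?_))
    (Finset.sum_le_sum_of_subset (Finset.filter_subset _ _))
  have := nsc_zeros A hA (fun m => c m x) l (by simpa using hx)
    (fun m hm => by simp [hz m hm])
  simp only [mpMap, LinearMap.coe_mk, AddHom.coe_mk]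
  omega

theorem exists_top {F : Type} [Field F] {ι : Type}
    {M : ℕ} (c : Fin M → ι → F) (hc : c ≠ 0) :
    ∃ l, c l ≠ 0 ∧ ∀ m, l < m → c m = 0 := by
  classical
  have hne : (Finset.univ.filter fun l => c l ≠ 0).Nonempty := by
    obtain ⟨l, hl⟩ := Function.ne_iff.mp hc
    exact ⟨l, by simpa using hl⟩
  refine ⟨(Finset.univ.filter fun l => c l ≠ 0).max' hne, ?_, ?_⟩
  · simpa using Finset.max'_mem _ hne
  · intro m hm
    by_contra h
    exact absurd (Finset.le_max' (Finset.univ.filter fun l => c l ≠ 0) m (by simpa using h))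
      (not_le.mpr hm)

theorem mpMap_inj {F : Type} [Field F] [Fintype F] [DecidableEq F] {ι : Type} [Fintype ι]
    {M N : ℕ} (hMN : M < N) (A : Matrix (Fin M) (Fin N) F) (hA : IsNSC A) :
    Function.Injective (mpMap (ι := ι) A) := by
  rw [injective_iff_map_eq_zero]
  intro c hc
  by_contra hne
  obtain ⟨l, hl, hz⟩ := exists_top c hne
  have h := mp_weight A hA c l hz
  rw [hc, hammingNorm_zero] at h
  have h2 := hammingNorm_pos_iff.mpr hl
  have h3 : 0 < N - (l : ℕ) := by have := l.2; omega
  have := Nat.mul_pos h3 h2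
  omega

theorem finrank_pi_sub {F : Type} [Field F] {ι : Type} [Fintype ι]
    {M : ℕ} (Cs : Fin M → Submodule F (ι → F)) :
    Module.finrank F ↥(Submodule.pi Set.univ Cs) = ∑ i, Module.finrank F ↥(Cs i) := by
  have e : ↥(Submodule.pi Set.univ Cs) ≃ₗ[F] ((i : Fin M) → ↥(Cs i)) :=
    { toFun := fun x i => ⟨x.1 i, x.2 i (Set.mem_univ i)⟩
      invFun := fun y => ⟨fun i => (y i).1, fun i _ => (y i).2⟩
      left_inv := fun x => rfl
      right_inv := fun y => rfl
      map_add' := fun x y => rfl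
      map_smul' := fun a x => rfl }
  rw [e.finrank_eq, Module.finrank_pi_fintype]

theorem exists_comb {F : Type} [Field F] {M N : ℕ} (hM : 1 < M) (hMN : M < N)
    (A : Matrix (Fin M) (Fin N) F) :
    ∃ v : Fin M → F, v ≠ 0 ∧ ∀ j : Fin N, (j : ℕ) < M - 1 → ∑ m, v m * A m j = 0 := by
  let B : Matrix (Fin M) (Fin (M - 1)) F := fun m j => A m (Fin.castLE (by omega) j)
  have hker : LinearMap.ker (Matrix.vecMulLinear B) ≠ ⊥ :=
    LinearMap.ker_ne_bot_of_finrank_lt (by simp; omega)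
  obtain ⟨v, hv, hne⟩ := Submodule.exists_mem_ne_zero_of_ne_bot hker
  refine ⟨v, hne, fun j hj => ?_⟩
  exact congrFun (LinearMap.mem_ker.mp hv) ⟨j, hj⟩

/-- Corollary 2: with nested MDS codes `D_1 ⊆ D_r` of length `q + 1`,
`D_1` of parameters `[q+1, 1, q+1]_q`, `D_r` of parameters `[q+1, r, q+2-r]_q`, `r` odd,
`C_1 = ⋯ = C_{M-1} = D_r`, `C_M = D_1`, and an `M × N` NSC matrix `A`, if
`(r-1)(N-M+1) + r ≤ q + 2` then the matrix-product code is an optimal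
`(r, q+2-r)`-LRC with parameters `[N(q+1), (M-1)r+1, (N-M+1)(q+1)]_q`. -/
theorem length_q_add_one_matrixProduct_optimal
    (q : ℕ) (hq : IsPrimePow q)
    (F : Type) [Field F] [Fintype F] [DecidableEq F] (hF : Fintype.card F = q)
    (r M N : ℕ) (hr : 0 < r) (hodd : Odd r) (hM : 1 < M) (hMN : M < N) (hNq : N ≤ q)
    (D1 Dr : Submodule F (Fin (q + 1) → F)) (hsub : D1 ≤ Dr)
    (hD1k : Module.finrank F ↥D1 = 1) (hD1d : minDistIs D1 (q + 1))
    (hDrk : Module.finrank F ↥Dr = r) (hDrd : minDistIs Dr (q + 2 - r))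
    (A : Matrix (Fin M) (Fin N) F) (hA : IsNSC A)
    (hcond : (r - 1) * (N - M + 1) + r ≤ q + 2) :
    IsOptimalLRC
      (matrixProductCode (fun i : Fin M => if (i : ℕ) < M - 1 then Dr else D1) A)
      ((M - 1) * r + 1) ((N - M + 1) * (q + 1)) r (q + 2 - r) := by
  classical
  have hCs : ∀ i : Fin M, (if (i : ℕ) < M - 1 then Dr else D1) ≤ Dr := by
    intro i; split_ifs
    · exact le_rfl
    · exact hsub
  have hDs : ∀ i : Fin M, D1 ≤ (if (i : ℕ) < M - 1 then Dr else D1) := by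
    intro i; split_ifs
    · exact hsub
    · exact le_rfl
  have hlow : minWtGe (matrixProductCode (fun i : Fin M => if (i : ℕ) < M - 1 then Dr else D1) A)
      ((N - M + 1) * (q + 1)) := by
    rintro w ⟨c, hc, rfl⟩ hne
    have hc0 : c ≠ 0 := by rintro rfl; exact hne (map_zero _)
    obtain ⟨l, hl, hz⟩ := exists_top c hc0
    refine le_trans ?_ (mp_weight A hA c l hz)
    have hcl := hc l (Set.mem_univ l)
    have hlM := l.2
    simp only at hcl
    split_ifs at hcl with hlt
    · have hw := hDrd.2 _ hcl hl
      have h1 : (N - M + 1 + 1) * (q + 2 - r) ≤ (N - l) * hammingNorm (c l) :=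
        Nat.mul_le_mul (by omega) hw
      refine le_trans ?_ h1
      obtain ⟨s, rfl⟩ : ∃ s, r = s + 1 := ⟨r - 1, by omega⟩
      generalize N - M + 1 = t at *
      obtain ⟨u, hu⟩ : ∃ u, q + 2 = (s + 1 - 1) * t + (s + 1) + u := Nat.exists_eq_add_of_le hcond
      simp only [Nat.add_sub_cancel] at hu
      have e1 : q + 2 - (s + 1) = s * t + u := by omega
      have e2 : q + 1 = s * t + s + u := by omega
      rw [e1, e2]
      nlinarith [Nat.zero_le u]
    · have hw := hD1d.2 _ hcl hl
      exact Nat.mul_le_mul (by omega) hw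
  refine ⟨?_, ?_, ⟨?_, hlow⟩, ?_⟩
  · rintro ⟨j, x⟩
    refine ⟨Finset.univ.filter fun p => p.1 = j, by simp, ?_, ?_⟩
    · have : (Finset.univ.filter fun p : Fin N × Fin (q + 1) => p.1 = j) =
          ({j} : Finset (Fin N)) ×ˢ Finset.univ := by
        ext ⟨a, b⟩; simp [eq_comm]
      rw [this, Finset.card_product]
      simp
      omega
    · rintro w ⟨_, ⟨c, hc, rfl⟩, rfl⟩ hne
      set u : Fin (q + 1) → F := fun x => mpMap A c (j, x) with hu
      have hmem : u ∈ Dr := by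
        have : u = ∑ m, A m j • c m := by
          funext x
          simp [hu, mpMap, mul_comm]
        rw [this]
        exact Submodule.sum_mem _ fun m _ => Submodule.smul_mem _ _ (hCs m (hc m (Set.mem_univ m)))
      have hune : u ≠ 0 := by
        intro h0
        apply hne
        funext ⟨⟨a, b⟩, hp⟩
        have ha : a = j := by simpa using hp
        subst ha
        exact congrFun h0 b
      refine le_trans (hDrd.2 u hmem hune) ?_
      unfold hammingNorm
      refine Finset.card_le_card_of_injOn (fun x => ⟨(j, x), by simp⟩) ?_ ?_
      · intro x hx
        exact Finset.mem_coe.mpr (Finset.mem_filter.mpr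
          ⟨Finset.mem_univ _, (Finset.mem_filter.mp (Finset.mem_coe.mp hx)).2⟩)
      · intro x _ y _ hxy
        simpa using hxy
  · unfold matrixProductCode
    rw [← (Submodule.equivMapOfInjective _ (mpMap_inj hMN A hA) _).finrank_eq, finrank_pi_sub]
    obtain ⟨m, rfl⟩ : ∃ m, M = m + 1 := ⟨M - 1, by omega⟩
    have hf : ∀ i : Fin (m + 1), Module.finrank F
        ↥(if (i : ℕ) < m + 1 - 1 then Dr else D1) = if (i : ℕ) < m then r else 1 := by
      intro i
      rw [Nat.add_sub_cancel]
      by_cases h : (i : ℕ) < m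
      · rw [if_pos h, if_pos h, hDrk]
      · rw [if_neg h, if_neg h, hD1k]
    rw [Finset.sum_congr rfl fun i _ => hf i, Fin.sum_univ_castSucc]
    simp
  · obtain ⟨d, hd, hd0, hdw⟩ := hD1d.1
    obtain ⟨v, hv0, hv⟩ := exists_comb hM hMN A
    have hc0 : (fun m => v m • d) ≠ 0 := by
      obtain ⟨m, hm⟩ := Function.ne_iff.mp hv0
      exact Function.ne_iff.mpr ⟨m, smul_ne_zero hm hd0⟩
    have hmem : mpMap A (fun m => v m • d) ∈
        matrixProductCode (fun i : Fin M => if (i : ℕ) < M - 1 then Dr else D1) A :=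
      ⟨_, fun m _ => hDs m (Submodule.smul_mem _ _ hd), rfl⟩
    have hne : mpMap A (fun m => v m • d) ≠ 0 := fun h =>
      hc0 (mpMap_inj hMN A hA (by rw [h, map_zero]))
    refine ⟨_, hmem, hne, le_antisymm ?_ (hlow _ hmem hne)⟩
    rw [hamming_prod]
    have hx : ∀ x ∈ (Finset.univ : Finset (Fin (q + 1))), (Finset.univ.filter fun j : Fin N =>
        mpMap A (fun m => v m • d) (j, x) ≠ 0).card ≤ N - M + 1 := by
      intro x _
      have hs : (Finset.univ.filter fun j : Fin N =>
          mpMap A (fun m => v m • d) (j, x) ≠ 0) ⊆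
          (Finset.univ.filter fun j : Fin N => ¬ (j : ℕ) < M - 1) := by
        intro j hj
        simp only [Finset.mem_filter, Finset.mem_univ, true_and] at hj ⊢
        intro hlt
        apply hj
        have : mpMap A (fun m => v m • d) (j, x) = d x * ∑ m, v m * A m j := by
          simp only [mpMap, LinearMap.coe_mk, AddHom.coe_mk, Pi.smul_apply, smul_eq_mul,
            Finset.mul_sum]
          exact Finset.sum_congr rfl fun m _ => by ring
        rw [this, hv j hlt, mul_zero]
      refine le_trans (Finset.card_le_card hs) ?_
      have h1 := Finset.card_filter_add_card_filter_not (s := (Finset.univ : Finset (Fin N)))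
        (fun j : Fin N => (j : ℕ) < M - 1)
      rw [Fin.card_filter_val_lt] at h1
      simp only [Finset.card_univ, Fintype.card_fin] at h1
      omega
    refine le_trans (Finset.sum_le_card_nsmul _ _ _ hx) ?_
    simp [mul_comm]
  · have hrq : r ≤ q + 1 := by
      rw [← hDrk]
      simpa using Submodule.finrank_le Dr
    have hceil : ⌈(((M - 1) * r + 1 : ℕ) : ℚ) / (r : ℚ)⌉ = (M : ℤ) := by
      rw [Int.ceil_eq_iff]
      have hr' : (0 : ℚ) < r := by exact_mod_cast hr
      obtain ⟨m, rfl⟩ : ∃ m, M = m + 1 := ⟨M - 1, by omega⟩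
      have hr1 : (1 : ℚ) ≤ r := by exact_mod_cast hr
      rw [Nat.add_sub_cancel]
      push_cast
      rw [lt_div_iff₀ hr', div_le_iff₀ hr']
      constructor <;> nlinarith
    unfold optBound
    rw [hceil]
    simp only [Fintype.card_prod, Fintype.card_fin]
    push_cast [Nat.cast_sub hMN.le, Nat.cast_sub hM.le, Nat.cast_sub (show r ≤ q + 2 by omega)]
    ring

end LRCPaper
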